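/- Let n ≥ 1. Assume a transform 𝒯 : GX_ℂ → GX_ℂ satisfies: (1) 𝒯(𝒯(Φ)) = Φ for every Φ ∈ GX_ℂ; (2) for every Φ ∈ GX_ℂ, 𝒯(Φ) = Φ if Φ ∈ GY_ℂ and 𝒯(Φ) ≠ Φ if Φ ∉ GY_ℂ; and (3) there exists a holomorphic map F : ℂ^{2n+1} → ℂ^{2n+1} such that 𝒯(Φ) = F ∘ Φ for every Φ ∈ GX_ℂ. Then 𝒯 is the complex Legendre involution, i.e. 𝒯(θ, a, b) = (b, Σᵢ₌₁ⁿ bᵢθᵢ − a, θ) for every (θ, a, b) ∈ GX_ℂ. -/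

import Mathlib

open scoped BigOperators

/-- Triples `(θ, a, b)` encoding maps `ℂⁿ → ℂ^{2n+1}`. -/
abbrev CTripleMap (n : ℕ) :=
  ((Fin n → ℂ) → Fin n → ℂ) × ((Fin n → ℂ) → ℂ) × ((Fin n → ℂ) → Fin n → ℂ)

/-- All three components are holomorphic (entire). -/
def HolTriple (n : ℕ) (Φ : CTripleMap n) : Prop :=
  Differentiable ℂ Φ.1 ∧ Differentiable ℂ Φ.2.1 ∧ Differentiable ℂ Φ.2.2

/-- The creative condition (*): `da = ∑ᵢ bᵢ dθᵢ` (complex derivatives). -/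
def CCreative (n : ℕ) (Φ : CTripleMap n) : Prop :=
  ∀ x v : Fin n → ℂ,
    fderiv ℂ Φ.2.1 x v = ∑ i, Φ.2.2 x i * fderiv ℂ (fun y => Φ.1 y i) x v

/-- The set of points where the complex differential of `f : ℂⁿ → ℂⁿ` is invertible. -/
def CRegPts (n : ℕ) (f : (Fin n → ℂ) → Fin n → ℂ) : Set (Fin n → ℂ) :=
  {x | Function.Bijective (fderiv ℂ f x)}

/-- `GX_ℂ`: holomorphic triples satisfying (*) with `Reg θ` and `Reg b` dense. -/
def CGXset (n : ℕ) : Set (CTripleMap n) :=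
  {Φ | HolTriple n Φ ∧ CCreative n Φ ∧ Dense (CRegPts n Φ.1) ∧ Dense (CRegPts n Φ.2.2)}

/-- `GY_ℂ`: triples of the form `(θ, ½∑θᵢ², θ)` with `θ` holomorphic and `Reg θ` dense. -/
def CGYset (n : ℕ) : Set (CTripleMap n) :=
  {Φ | ∃ θ : (Fin n → ℂ) → Fin n → ℂ, Differentiable ℂ θ ∧ Dense (CRegPts n θ) ∧
    Φ = (θ, fun x => (1 / 2 : ℂ) * ∑ i, θ x i ^ 2, θ)}

/-- The complex Legendre involution `L_ℂ(θ, a, b) = (b, ∑ᵢ bᵢθᵢ − a, θ)`. -/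
noncomputable def CLegendre (n : ℕ) (Φ : CTripleMap n) : CTripleMap n :=
  (Φ.2.2, fun x => (∑ i, Φ.2.2 x i * Φ.1 x i) - Φ.2.1 x, Φ.1)

/-- Packing a triple `(θ, a, b)` into a single map `ℂⁿ → ℂ^{2n+1}`. -/
def cPackTriple (n : ℕ) (Φ : CTripleMap n) : (Fin n → ℂ) → (Fin n → ℂ) × ℂ × (Fin n → ℂ) :=
  fun x => (Φ.1 x, Φ.2.1 x, Φ.2.2 x)

section Holomorphic

open Metric Filter Topology

variable {E G : Type*} [NormedAddCommGroup E] [NormedSpace ℂ E] [FiniteDimensional ℂ E]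
  [NormedAddCommGroup G] [NormedSpace ℂ G]

theorem continuous_fderiv_of_holomorphic {f : E → G} (hf : Differentiable ℂ f) :
    Continuous (fderiv ℂ f) := by
  have : ProperSpace E := FiniteDimensional.proper ℂ E
  rw [Metric.continuous_iff]
  intro x ε hε
  have hunif := (isCompact_closedBall x 2).uniformContinuousOn_of_continuous
    hf.continuous.continuousOn
  rw [Metric.uniformContinuousOn_iff] at hunif
  obtain ⟨δ, hδ, h⟩ := hunif (ε / 4) (by positivity)
  refine ⟨min δ 1, by positivity, fun y hy => ?_⟩
  have hyδ : dist y x < δ := hy.trans_le (min_le_left _ _)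
  have hy1 : dist y x < 1 := hy.trans_le (min_le_right _ _)
  have hclose : ∀ z : E, ‖z‖ < 1 → ‖f (y + z) - f (x + z)‖ < ε / 4 := by
    intro z hz
    rw [← dist_eq_norm]
    refine h _ ?_ _ ?_ (by simpa using hyδ)
    · rw [mem_closedBall]
      calc dist (y + z) x ≤ dist (y + z) y + dist y x := dist_triangle _ _ _
        _ ≤ 1 + 1 := by gcongr; simpa using hz.le
        _ = 2 := by norm_num
    · rw [mem_closedBall]
      simpa using hz.le.trans one_le_two
  have hd : ∀ c : E, Differentiable ℂ fun z => f (c + z) := fun c =>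
    hf.comp (differentiable_id.const_add c)
  have hderiv : fderiv ℂ (fun z => f (y + z) - f (x + z)) 0 = fderiv ℂ f y - fderiv ℂ f x := by
    rw [fderiv_fun_sub ((hd y) 0) ((hd x) 0), fderiv_comp_add_left, fderiv_comp_add_left,
      add_zero, add_zero]
  have hbound := Complex.norm_fderiv_le_div_of_mapsTo_ball (c := (0 : E)) (R₁ := 1) (R₂ := ε / 2)
    (f := fun z => f (y + z) - f (x + z)) ((hd y).sub (hd x)).differentiableOn
    (fun z hz => by
      have h1 := hclose z (by simpa using hz)
      have h0 := hclose 0 (by simp)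
      rw [mem_closedBall, dist_eq_norm]
      exact (norm_sub_le _ _).trans (by linarith)) one_pos
  rw [hderiv] at hbound
  rw [dist_eq_norm]
  linarith

variable [CompleteSpace G]

theorem differentiable_fderiv_apply_of_holomorphic {f : E → G} (hf : Differentiable ℂ f) (w : E) :
    Differentiable ℂ fun x => fderiv ℂ f x w := by
  have : ProperSpace E := FiniteDimensional.proper ℂ E
  have hline : ∀ x : E, Differentiable ℂ fun z : ℂ => f (x + z • w) := fun x =>
    hf.comp ((differentiable_id.smul_const w).const_add x)
  have hformula : (fun x => fderiv ℂ f x w) = fun x =>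
      (2 * Real.pi * Complex.I)⁻¹ •
        ∮ z in C(0, 1), (1 / (z - 0) ^ 2) • f (x + z • w) := by
    funext x
    rw [(hline x).differentiableOn.deriv_eq_smul_circleIntegral one_pos,
      inv_smul_smul₀ Complex.two_pi_I_ne_zero]
    have h := (hf (x + (0 : ℂ) • w)).hasFDerivAt.comp_hasDerivAt (0 : ℂ)
      (((hasDerivAt_id (0 : ℂ)).smul_const w).const_add x)
    have h' := h.deriv
    simp only [zero_smul, add_zero, one_smul] at h'
    exact h'.symm
  rw [hformula]
  refine Differentiable.const_smul (fun x₀ => ?_) _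
  let k : ℝ → ℂ := fun t => deriv (circleMap 0 1) t * (1 / (circleMap 0 1 t - 0) ^ 2)
  have hk : Continuous k := by
    have hne : ∀ t, circleMap 0 1 t ≠ 0 := fun t => circleMap_ne_center one_ne_zero
    have hc : Continuous (circleMap 0 1) := continuous_circleMap 0 1
    simp only [k, deriv_circleMap, sub_zero]
    exact (hc.mul continuous_const).mul
      (continuous_const.div (hc.pow 2) fun t => pow_ne_zero 2 (hne t))
  have hknorm : ∀ t, ‖k t‖ = 1 := fun t => by simp [k]
  obtain ⟨C, hC⟩ := (isCompact_closedBall x₀ (1 + ‖w‖)).exists_bound_of_continuousOn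
    (continuous_fderiv_of_holomorphic hf).continuousOn
  have hcw : ∀ x : E, Continuous fun t : ℝ => x + circleMap 0 1 t • w := fun x => by fun_prop
  have key := intervalIntegral.hasFDerivAt_integral_of_dominated_of_fderiv_le
    (𝕜 := ℂ) (μ := MeasureTheory.volume) (a := 0) (b := 2 * Real.pi)
    (F := fun x t => k t • f (x + circleMap 0 1 t • w))
    (F' := fun x t => k t • fderiv ℂ f (x + circleMap 0 1 t • w))
    (x₀ := x₀) (s := closedBall x₀ 1) (bound := fun _ => C)
    (closedBall_mem_nhds x₀ one_pos)
    (Eventually.of_forall fun x =>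
      (hk.smul (hf.continuous.comp (hcw x))).aestronglyMeasurable)
    ((hk.smul (hf.continuous.comp (hcw x₀))).intervalIntegrable _ _)
    (hk.smul ((continuous_fderiv_of_holomorphic hf).comp (hcw x₀))).aestronglyMeasurable
    (Eventually.of_forall fun t _ x hx => by
      rw [norm_smul, hknorm, one_mul]
      refine hC _ ?_
      rw [mem_closedBall] at hx ⊢
      calc dist (x + circleMap 0 1 t • w) x₀
          ≤ dist (x + circleMap 0 1 t • w) x + dist x x₀ := dist_triangle _ _ _
        _ ≤ ‖w‖ + 1 := by gcongr; simp [norm_smul]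
        _ = 1 + ‖w‖ := add_comm _ _)
    intervalIntegrable_const
    (Eventually.of_forall fun t _ x _ =>
      (((hf _).hasFDerivAt.comp x ((hasFDerivAt_id x).add_const _)).const_smul (k t)))
  have heq : (fun x => ∮ z in C(0, 1), (1 / (z - 0) ^ 2) • f (x + z • w)) =
      fun x => ∫ t in (0)..(2 * Real.pi), k t • f (x + circleMap 0 1 t • w) := by
    funext x
    simp only [circleIntegral, k, smul_smul]
  rw [heq]
  exact key.differentiableAt

theorem differentiable_fderiv_of_holomorphic {f : E → G} (hf : Differentiable ℂ f) :
    Differentiable ℂ (fderiv ℂ f) := by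
  let e := (Module.finBasis ℂ E).equivFunL
  let e' := (e.arrowCongr (1 : G ≃L[ℂ] G)).trans (ContinuousLinearEquiv.piRing (Fin _))
  rw [← e'.comp_differentiable_iff, differentiable_pi]
  exact fun i => differentiable_fderiv_apply_of_holomorphic hf (e.symm (Pi.single i 1))

theorem dense_ne_zero_of_holomorphic {E : Type*} [NormedAddCommGroup E] [NormedSpace ℂ E]
    {g : E → ℂ} (hg : Differentiable ℂ g) {p : E}
    (hp : g p ≠ 0) : Dense {x | g x ≠ 0} := by
  intro x
  by_contra hx
  have hline : Differentiable ℂ fun t : ℂ => g (x + t • (p - x)) :=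
    hg.comp ((differentiable_id.smul_const _).const_add x)
  have hev : (fun t : ℂ => g (x + t • (p - x))) =ᶠ[𝓝 0] 0 := by
    rw [mem_closure_iff_frequently, not_frequently] at hx
    have hc : Tendsto (fun t : ℂ => x + t • (p - x)) (𝓝 0) (𝓝 x) := by
      have : Continuous fun t : ℂ => x + t • (p - x) := by fun_prop
      simpa using this.tendsto 0
    filter_upwards [hc.eventually hx] with t ht
    simpa using ht
  have h := AnalyticOnNhd.eqOn_zero_of_preconnected_of_eventuallyEq_zero
    (fun z _ => hline.analyticAt z) isPreconnected_univ (Set.mem_univ 0) hev (Set.mem_univ 1)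
  exact hp (by simpa using h)

end Holomorphic

section Transversality

open Matrix

variable {n : ℕ}

/-- An isotropic subspace not containing `(e, 0)` is transverse to the graph of some symmetric
matrix killing `e`. -/
theorem exists_isSymm_graph_transverse {K : Submodule ℂ ((Fin n → ℂ) × (Fin n → ℂ))}
    (hK : ∀ x ∈ K, ∀ y ∈ K, x.1 ⬝ᵥ y.2 = x.2 ⬝ᵥ y.1) {e : Fin n → ℂ} (he : (e, 0) ∉ K) :
    ∃ M : Matrix (Fin n) (Fin n) ℂ, M.IsSymm ∧ M *ᵥ e = 0 ∧ ∀ x, (x, M *ᵥ x) ∈ K → x = 0 := by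
  let S : Matrix (Fin n) (Fin n) ℂ → Submodule ℂ (Fin n → ℂ) := fun M =>
    K.comap (LinearMap.prod LinearMap.id M.mulVecLin)
  have hS : ∀ M x, x ∈ S M ↔ (x, M *ᵥ x) ∈ K := fun M x => Iff.rfl
  suffices H : ∀ d : ℕ, ∀ M : Matrix (Fin n) (Fin n) ℂ, M.IsSymm → M *ᵥ e = 0 →
      Module.finrank ℂ (S M) = d →
      ∃ M : Matrix (Fin n) (Fin n) ℂ, M.IsSymm ∧ M *ᵥ e = 0 ∧ ∀ x, (x, M *ᵥ x) ∈ K → x = 0 from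
    H _ 0 (by simp [Matrix.IsSymm]) (by simp) rfl
  intro d
  induction d using Nat.strong_induction_on with
  | _ d ih =>
  intro M hM hMe hd
  by_cases htriv : ∀ x, (x, M *ᵥ x) ∈ K → x = 0
  · exact ⟨M, hM, hMe, htriv⟩
  push Not at htriv
  obtain ⟨z, hz, hz0⟩ := htriv
  have he0 : e ≠ 0 := by
    rintro rfl
    exact he K.zero_mem
  obtain ⟨j, hj⟩ : ∃ j, e j ≠ 0 := by
    by_contra! h
    exact he0 (funext h)
  obtain ⟨i, hi⟩ : ∃ i, e j * z i - e i * z j ≠ 0 := by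
    by_contra! h
    have hze : z = (z j / e j) • e := by
      funext i
      have := h i
      simp only [Pi.smul_apply, smul_eq_mul]
      field_simp
      linear_combination this
    have hc : z j / e j ≠ 0 := by
      intro hc
      rw [hc, zero_smul] at hze
      exact hz0 hze
    refine he ((K.smul_mem_iff hc).1 ?_)
    rw [hze, mulVec_smul, hMe] at hz
    simpa using hz
  let m : Fin n → ℂ := Pi.single i (e j) - Pi.single j (e i)
  have hme : m ⬝ᵥ e = 0 := by
    simp only [m, sub_dotProduct, single_dotProduct]
    ring
  have hmz : m ⬝ᵥ z ≠ 0 := by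
    simpa only [m, sub_dotProduct, single_dotProduct] using hi
  have hmul : ∀ x, (M + vecMulVec m m) *ᵥ x = M *ᵥ x + (m ⬝ᵥ x) • m := by
    intro x
    rw [add_mulVec, vecMulVec_mulVec]
    simp
  have hsymm : ∀ x y, x ⬝ᵥ (M *ᵥ y) = (M *ᵥ x) ⬝ᵥ y := by
    intro x y
    rw [dotProduct_mulVec, ← mulVec_transpose, hM.eq]
  have hker : ∀ x ∈ S (M + vecMulVec m m), m ⬝ᵥ x = 0 := by
    intro x hx
    rw [hS, hmul] at hx
    have h := hK _ hz _ hx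
    simp only [dotProduct_add, dotProduct_smul, hsymm, smul_eq_mul] at h
    rw [add_eq_left, dotProduct_comm z m] at h
    exact (mul_eq_zero.1 h).resolve_right hmz
  have hlt : S (M + vecMulVec m m) < S M := by
    refine lt_of_le_of_ne (fun x hx => ?_) (fun heq => ?_)
    · have h0 := hker x hx
      rw [hS, hmul, h0, zero_smul, add_zero] at hx
      exact hx
    · exact hmz (hker z (heq ▸ hz))
  refine ih _ (hd ▸ Submodule.finrank_lt_finrank_of_lt hlt) (M + vecMulVec m m) ?_ ?_ rfl
  · exact hM.add (by simp [Matrix.IsSymm, transpose_vecMulVec])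
  · rw [hmul, hMe, hme, zero_smul, add_zero]

theorem exists_isSymm_injective_graph {f g : (Fin n → ℂ) × (Fin n → ℂ) →ₗ[ℂ] (Fin n → ℂ)}
    (hf : ∀ x y, f x = 0 → f y = 0 → x.1 ⬝ᵥ y.2 = x.2 ⬝ᵥ y.1)
    (hg : ∀ x y, g x = 0 → g y = 0 → x.1 ⬝ᵥ y.2 = x.2 ⬝ᵥ y.1)
    {e : Fin n → ℂ} (hfe : f (e, 0) ≠ 0) (hge : g (e, 0) ≠ 0) :
    ∃ M : Matrix (Fin n) (Fin n) ℂ, M.IsSymm ∧ M *ᵥ e = 0 ∧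
      Function.Injective (fun x => f (x, M *ᵥ x)) ∧
      Function.Injective (fun x => g (x, M *ᵥ x)) := by
  obtain ⟨M₁, hs₁, he₁, h₁⟩ := exists_isSymm_graph_transverse (K := LinearMap.ker f)
    (fun x hx y hy => hf x y hx hy) hfe
  obtain ⟨M₂, hs₂, he₂, h₂⟩ := exists_isSymm_graph_transverse (K := LinearMap.ker g)
    (fun x hx y hy => hg x y hx hy) hge
  let M : ℂ → Matrix (Fin n) (Fin n) ℂ := fun t => M₁ + t • (M₂ - M₁)
  let D : ((Fin n → ℂ) × (Fin n → ℂ) →ₗ[ℂ] (Fin n → ℂ)) → ℂ → ℂ := fun f t =>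
    (LinearMap.toMatrix' (f ∘ₗ LinearMap.inl ℂ _ _) +
      LinearMap.toMatrix' (f ∘ₗ LinearMap.inr ℂ _ _) * M t).det
  have hD : ∀ (f : (Fin n → ℂ) × (Fin n → ℂ) →ₗ[ℂ] (Fin n → ℂ)) t x, (LinearMap.toMatrix' (f ∘ₗ LinearMap.inl ℂ _ _) +
      LinearMap.toMatrix' (f ∘ₗ LinearMap.inr ℂ _ _) * M t) *ᵥ x = f (x, M t *ᵥ x) := by
    intro f t x
    rw [add_mulVec, ← mulVec_mulVec, LinearMap.toMatrix'_mulVec, LinearMap.toMatrix'_mulVec]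
    simp [← map_add]
  have hinj : ∀ f t, D f t ≠ 0 ↔ Function.Injective (fun x => f (x, M t *ᵥ x)) := by
    intro f t
    rw [← isUnit_iff_ne_zero, ← isUnit_iff_isUnit_det, ← mulVec_injective_iff_isUnit]
    simp only [← hD]
  have hinj0 : ∀ (f : (Fin n → ℂ) × (Fin n → ℂ) →ₗ[ℂ] (Fin n → ℂ)) t,
      (∀ x, (x, M t *ᵥ x) ∈ LinearMap.ker f → x = 0) → D f t ≠ 0 := by
    intro f t h
    rw [hinj]
    have : (fun x => f (x, M t *ᵥ x)) =
        ⇑(f ∘ₗ LinearMap.prod LinearMap.id (M t).mulVecLin) := rfl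
    rw [this, injective_iff_map_eq_zero]
    exact h
  have hdiff : ∀ f, Differentiable ℂ (D f) := by
    intro f
    simp only [D, M, det_apply, Matrix.add_apply, Matrix.mul_apply, Matrix.smul_apply]
    fun_prop
  have hd₁ := dense_ne_zero_of_holomorphic (hdiff f) (hinj0 f 0 (by simpa [M] using h₁))
  have hd₂ := dense_ne_zero_of_holomorphic (hdiff g) (hinj0 g 1 (by simpa [M] using h₂))
  obtain ⟨t, htf, htg⟩ := (hd₁.inter_of_isOpen_left hd₂
    (isOpen_ne_fun (hdiff f).continuous continuous_const)).nonempty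
  refine ⟨M t, hs₁.add ((hs₂.sub hs₁).smul t), ?_, (hinj f t).1 htf, (hinj g t).1 htg⟩
  simp [M, add_mulVec, smul_mulVec, sub_mulVec, he₁, he₂]

end Transversality

section Legendrian

open Matrix

variable {n : ℕ}

theorem Differentiable.dotProduct {E : Type*} [NormedAddCommGroup E] [NormedSpace ℂ E]
    {f g : E → Fin n → ℂ} (hf : Differentiable ℂ f) (hg : Differentiable ℂ g) :
    Differentiable ℂ fun x => f x ⬝ᵥ g x := by
  simp only [_root_.dotProduct]
  fun_prop

theorem fderiv_dotProduct_apply {E : Type*} [NormedAddCommGroup E] [NormedSpace ℂ E]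
    {f g : E → Fin n → ℂ} (hf : Differentiable ℂ f) (hg : Differentiable ℂ g) (x v : E) :
    fderiv ℂ (fun x => f x ⬝ᵥ g x) x v = f x ⬝ᵥ fderiv ℂ g x v + fderiv ℂ f x v ⬝ᵥ g x := by
  have hi : ∀ {h : E → Fin n → ℂ}, Differentiable ℂ h → ∀ i,
      HasFDerivAt (fun x => h x i) ((ContinuousLinearMap.proj i).comp (fderiv ℂ h x)) x :=
    fun hh => hasFDerivAt_pi'.1 (hh x).hasFDerivAt
  have h : HasFDerivAt (fun x => f x ⬝ᵥ g x) _ x :=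
    HasFDerivAt.fun_sum fun i _ => (hi hf i).mul (hi hg i)
  rw [h.fderiv]
  simp [_root_.dotProduct, Finset.sum_add_distrib, mul_comm]

/-- The space of one-jets `(θ, a, b)`. -/
abbrev JetSpace (n : ℕ) := (Fin n → ℂ) × ℂ × (Fin n → ℂ)

/-- The parametrization `(u, v) ↦ (u, b · u, v)` of the contact hyperplane. -/
def contactLift (b : Fin n → ℂ) : (Fin n → ℂ) × (Fin n → ℂ) →ₗ[ℂ] JetSpace n where
  toFun x := (x.1, b ⬝ᵥ x.1, x.2)
  map_add' x y := by simp
  map_smul' c x := by simp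

/-- The projection of the one-jet space forgetting the value `a`. -/
def forgetValue : JetSpace n →ₗ[ℂ] (Fin n → ℂ) × (Fin n → ℂ) where
  toFun x := (x.1, x.2.2)
  map_add' _ _ := rfl
  map_smul' _ _ := rfl

/-- The map `G` is holomorphic and tangent to the contact distribution. -/
def IsLegendrianMap (G : (Fin n → ℂ) → JetSpace n) : Prop :=
  Differentiable ℂ G ∧ ∀ x v, (fderiv ℂ G x v).2.1 = (G x).2.2 ⬝ᵥ (fderiv ℂ G x v).1

/-- The differential of `F` preserves the contact distribution. -/
def IsContactMap (F : JetSpace n → JetSpace n) : Prop :=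
  ∀ p x, (fderiv ℂ F p (contactLift p.2.2 x)).2.1 =
    (F p).2.2 ⬝ᵥ (fderiv ℂ F p (contactLift p.2.2 x)).1

/-- The differential of `F` between contact hyperplanes. -/
noncomputable def contactDeriv (F : JetSpace n → JetSpace n) (p : JetSpace n) :
    (Fin n → ℂ) × (Fin n → ℂ) →ₗ[ℂ] (Fin n → ℂ) × (Fin n → ℂ) :=
  forgetValue ∘ₗ (fderiv ℂ F p : JetSpace n →ₗ[ℂ] JetSpace n) ∘ₗ contactLift p.2.2

/-- The triple of components of a map to the one-jet space. -/
def unpackTriple (G : (Fin n → ℂ) → JetSpace n) : CTripleMap n :=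
  (fun x => (G x).1, fun x => (G x).2.1, fun x => (G x).2.2)

theorem IsContactMap.fderiv_contactLift {F : JetSpace n → JetSpace n} (hF : IsContactMap F)
    (p : JetSpace n) (x : (Fin n → ℂ) × (Fin n → ℂ)) :
    fderiv ℂ F p (contactLift p.2.2 x) = contactLift (F p).2.2 (contactDeriv F p x) :=
  Prod.ext rfl (Prod.ext (hF p x) rfl)

theorem IsLegendrianMap.fderiv_eq {G : (Fin n → ℂ) → JetSpace n} (hG : IsLegendrianMap G)
    (x v : Fin n → ℂ) :
    fderiv ℂ G x v = contactLift (G x).2.2 (forgetValue (fderiv ℂ G x v)) :=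
  Prod.ext rfl (Prod.ext (hG.2 x v) rfl)

theorem IsContactMap.comp_isLegendrianMap {F : JetSpace n → JetSpace n} (hF : IsContactMap F)
    (hFd : Differentiable ℂ F) {G : (Fin n → ℂ) → JetSpace n} (hG : IsLegendrianMap G) :
    IsLegendrianMap (F ∘ G) := by
  refine ⟨hFd.comp hG.1, fun x v => ?_⟩
  rw [fderiv_comp x (hFd _) (hG.1 x), ContinuousLinearMap.comp_apply, hG.fderiv_eq x v]
  exact hF _ _

theorem fderiv_unpackTriple {G : (Fin n → ℂ) → JetSpace n} (hG : Differentiable ℂ G)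
    (x v : Fin n → ℂ) :
    fderiv ℂ (unpackTriple G).1 x v = (fderiv ℂ G x v).1 ∧
    fderiv ℂ (unpackTriple G).2.1 x v = (fderiv ℂ G x v).2.1 ∧
    fderiv ℂ (unpackTriple G).2.2 x v = (fderiv ℂ G x v).2.2 := by
  have h := (hG x).hasFDerivAt
  have h1 : HasFDerivAt (unpackTriple G).1 _ x := h.fst
  have h2 : HasFDerivAt (unpackTriple G).2.1 _ x := h.snd.fst
  have h3 : HasFDerivAt (unpackTriple G).2.2 _ x := h.snd.snd
  rw [h1.fderiv, h2.fderiv, h3.fderiv]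
  exact ⟨rfl, rfl, rfl⟩

theorem holTriple_unpackTriple_iff {G : (Fin n → ℂ) → JetSpace n} :
    HolTriple n (unpackTriple G) ↔ Differentiable ℂ G :=
  ⟨fun h => h.1.prodMk (h.2.1.prodMk h.2.2), fun h => ⟨h.fst, h.snd.fst, h.snd.snd⟩⟩

theorem cCreative_unpackTriple_iff {G : (Fin n → ℂ) → JetSpace n} (hG : Differentiable ℂ G) :
    CCreative n (unpackTriple G) ↔ IsLegendrianMap G := by
  have hi : ∀ x v i, fderiv ℂ (fun y => (unpackTriple G).1 y i) x v = (fderiv ℂ G x v).1 i := by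
    intro x v i
    have h : HasFDerivAt (fun y => (unpackTriple G).1 y i) _ x :=
      hasFDerivAt_pi'.1 (hG x).hasFDerivAt.fst i
    rw [h.fderiv]
    rfl
  simp only [CCreative, IsLegendrianMap, hG, true_and, hi, (fderiv_unpackTriple hG _ _).2.1]
  rfl

theorem dense_cRegPts {f : (Fin n → ℂ) → Fin n → ℂ} (hf : Differentiable ℂ f)
    {x₀ : Fin n → ℂ} (hx₀ : Function.Injective (fderiv ℂ f x₀)) : Dense (CRegPts n f) := by
  let D : (Fin n → ℂ) → ℂ := fun x =>
    (LinearMap.toMatrix' (fderiv ℂ f x : (Fin n → ℂ) →ₗ[ℂ] (Fin n → ℂ))).det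
  have hD : ∀ x, D x ≠ 0 ↔ Function.Injective (fderiv ℂ f x) := by
    intro x
    rw [← isUnit_iff_ne_zero, ← isUnit_iff_isUnit_det, ← mulVec_injective_iff_isUnit]
    exact iff_of_eq (congrArg _ (funext (LinearMap.toMatrix'_mulVec _)))
  have hdiff : Differentiable ℂ D := by
    have hentry : ∀ i j, Differentiable ℂ fun x => fderiv ℂ f x (Pi.single j 1) i := fun i j =>
      differentiable_pi.1 (differentiable_fderiv_apply_of_holomorphic hf _) i
    simp only [D, det_apply]
    refine Differentiable.fun_sum fun σ _ => Differentiable.const_smul (fun x => ?_) _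
    exact (HasFDerivAt.finsetProd fun i _ => (hentry (σ i) i x).hasFDerivAt).differentiableAt
  refine (dense_ne_zero_of_holomorphic hdiff ((hD x₀).2 hx₀)).mono fun x hx => ?_
  have hinj := (hD x).1 hx
  exact ⟨hinj, (LinearMap.injective_iff_surjective
    (f := (fderiv ℂ f x : (Fin n → ℂ) →ₗ[ℂ] (Fin n → ℂ)))).1 hinj⟩

theorem IsLegendrianMap.unpackTriple_mem_CGXset {G : (Fin n → ℂ) → JetSpace n}
    (hG : IsLegendrianMap G) {x₀ : Fin n → ℂ}
    (h₁ : Function.Injective fun v => (fderiv ℂ G x₀ v).1)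
    (h₂ : Function.Injective fun v => (fderiv ℂ G x₀ v).2.2) :
    unpackTriple G ∈ CGXset n := by
  refine ⟨holTriple_unpackTriple_iff.2 hG.1, (cCreative_unpackTriple_iff hG.1).2 hG,
    dense_cRegPts (x₀ := x₀) hG.1.fst ?_, dense_cRegPts (x₀ := x₀) hG.1.snd.snd ?_⟩
  · have := funext fun v => (fderiv_unpackTriple hG.1 x₀ v).1
    rw [← this] at h₁
    exact h₁
  · have := funext fun v => (fderiv_unpackTriple hG.1 x₀ v).2.2
    rw [← this] at h₂
    exact h₂

/-- The differential of a Legendrian map has isotropic image. -/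
theorem IsLegendrianMap.isotropic {G : (Fin n → ℂ) → JetSpace n} (hG : IsLegendrianMap G)
    (x v w : Fin n → ℂ) :
    (fderiv ℂ G x v).1 ⬝ᵥ (fderiv ℂ G x w).2.2 = (fderiv ℂ G x v).2.2 ⬝ᵥ (fderiv ℂ G x w).1 := by
  have hdd : Differentiable ℂ (fderiv ℂ G) := differentiable_fderiv_of_holomorphic hG.1
  have hsymm := second_derivative_symmetric (fun y => (hG.1 y).hasFDerivAt) (hdd x).hasFDerivAt v w
  have key : ∀ v w, (fderiv ℂ (fderiv ℂ G) x w v).2.1 =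
      (G x).2.2 ⬝ᵥ (fderiv ℂ (fderiv ℂ G) x w v).1 +
        (fderiv ℂ G x w).2.2 ⬝ᵥ (fderiv ℂ G x v).1 := by
    intro v w
    have hv : HasFDerivAt (fun y => fderiv ℂ G y v) _ x :=
      (hdd x).hasFDerivAt.clm_apply (hasFDerivAt_const v x)
    have happ : ∀ w, fderiv ℂ (fun y => fderiv ℂ G y v) x w = fderiv ℂ (fderiv ℂ G) x w v := by
      intro w
      rw [hv.fderiv]
      simp
    have hdv : Differentiable ℂ fun y => fderiv ℂ G y v :=
      differentiable_fderiv_apply_of_holomorphic hG.1 v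
    have h := congrArg (fun f => fderiv ℂ f x w) (funext fun y => hG.2 y v)
    beta_reduce at h
    rw [fderiv_dotProduct_apply hG.1.snd.snd hdv.fst, (hdv x).hasFDerivAt.snd.fst.fderiv,
      (hdv x).hasFDerivAt.fst.fderiv, (hG.1 x).hasFDerivAt.snd.snd.fderiv] at h
    simpa [happ] using h
  have h1 := key v w
  have h2 := key w v
  rw [hsymm] at h2
  rw [dotProduct_comm]
  linear_combination h2 - h1

/-- The Legendrian map through `p` with tangent plane spanned by the columns of `(U, V)`. -/
noncomputable def planeMap (p : JetSpace n) (U V : Matrix (Fin n) (Fin n) ℂ) :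
    (Fin n → ℂ) → JetSpace n := fun w =>
  (p.1 + U *ᵥ w, p.2.1 + p.2.2 ⬝ᵥ (U *ᵥ w) + (1 / 2) * ((V *ᵥ w) ⬝ᵥ (U *ᵥ w)), p.2.2 + V *ᵥ w)

@[simp]
theorem planeMap_zero (p : JetSpace n) (U V : Matrix (Fin n) (Fin n) ℂ) :
    planeMap p U V 0 = p := by
  simp [planeMap]

theorem differentiable_mulVec (U : Matrix (Fin n) (Fin n) ℂ) :
    Differentiable ℂ fun w : Fin n → ℂ => U *ᵥ w :=
  U.mulVecLin.toContinuousLinearMap.differentiable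

theorem fderiv_mulVec (U : Matrix (Fin n) (Fin n) ℂ) (w h : Fin n → ℂ) :
    fderiv ℂ (fun w : Fin n → ℂ => U *ᵥ w) w h = U *ᵥ h :=
  congrArg (· h) (U.mulVecLin.toContinuousLinearMap.hasFDerivAt (x := w)).fderiv

theorem differentiable_planeMap (p : JetSpace n) (U V : Matrix (Fin n) (Fin n) ℂ) :
    Differentiable ℂ (planeMap p U V) := by
  have hU := differentiable_mulVec U
  have hV := differentiable_mulVec V
  exact (hU.const_add _).prodMk ((((((differentiable_const _).dotProduct hU)).const_add _).add
    ((hV.dotProduct hU).const_mul _)).prodMk (hV.const_add _))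

theorem fderiv_planeMap (p : JetSpace n) {U V : Matrix (Fin n) (Fin n) ℂ}
    (hUV : ∀ x y, (V *ᵥ x) ⬝ᵥ (U *ᵥ y) = (V *ᵥ y) ⬝ᵥ (U *ᵥ x)) (w h : Fin n → ℂ) :
    fderiv ℂ (planeMap p U V) w h = contactLift (p.2.2 + V *ᵥ w) (U *ᵥ h, V *ᵥ h) := by
  have hU := differentiable_mulVec U
  have hV := differentiable_mulVec V
  have h1 := (hU w).hasFDerivAt.const_add p.1
  have h3 := (hV w).hasFDerivAt.const_add p.2.2
  have hc : Differentiable ℂ fun w : Fin n → ℂ => p.2.2 := differentiable_const _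
  have h2 := (((hc.dotProduct hU) w).hasFDerivAt.const_add p.2.1).add
    (((hV.dotProduct hU) w).hasFDerivAt.const_mul (1 / 2))
  have hall : HasFDerivAt (planeMap p U V) _ w := h1.prodMk (h2.prodMk h3)
  rw [hall.fderiv]
  simp only [ContinuousLinearMap.prod_apply, _root_.add_apply,
    _root_.smul_apply, fderiv_dotProduct_apply hc hU, fderiv_dotProduct_apply hV hU,
    fderiv_mulVec, contactLift, LinearMap.coe_mk, AddHom.coe_mk]
  refine Prod.ext rfl (Prod.ext ?_ rfl)
  have := hUV w h
  simp only [fderiv_fun_const, Pi.zero_apply, _root_.zero_apply, zero_dotProduct,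
    add_dotProduct, smul_eq_mul]
  linear_combination (-1 / 2) * this

theorem isLegendrianMap_planeMap (p : JetSpace n) {U V : Matrix (Fin n) (Fin n) ℂ}
    (hUV : ∀ x y, (V *ᵥ x) ⬝ᵥ (U *ᵥ y) = (V *ᵥ y) ⬝ᵥ (U *ᵥ x)) :
    IsLegendrianMap (planeMap p U V) := by
  refine ⟨differentiable_planeMap p U V, fun w h => ?_⟩
  rw [fderiv_planeMap p hUV]
  rfl

end Legendrian

section LegendreMap

open Matrix

variable {n : ℕ}

/-- The Legendre involution of the one-jet space. -/
def legendreMap (p : JetSpace n) : JetSpace n := (p.2.2, p.2.2 ⬝ᵥ p.1 - p.2.1, p.1)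

theorem IsContactMap.fderiv_comp_planeMap {F : JetSpace n → JetSpace n} (hF : IsContactMap F)
    (hFd : Differentiable ℂ F) (p : JetSpace n) {U V : Matrix (Fin n) (Fin n) ℂ}
    (hUV : ∀ x y, (V *ᵥ x) ⬝ᵥ (U *ᵥ y) = (V *ᵥ y) ⬝ᵥ (U *ᵥ x)) (w h : Fin n → ℂ) :
    fderiv ℂ (F ∘ planeMap p U V) w h = contactLift (F (planeMap p U V w)).2.2
      (contactDeriv F (planeMap p U V w) (U *ᵥ h, V *ᵥ h)) := by
  rw [fderiv_comp w (hFd _) (differentiable_planeMap p U V w), ContinuousLinearMap.comp_apply,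
    fderiv_planeMap p hUV]
  exact hF.fderiv_contactLift (planeMap p U V w) _

theorem planeMap_one_zero (p : JetSpace n) (w : Fin n → ℂ) :
    planeMap p 1 0 w = (p.1 + w, p.2.1 + p.2.2 ⬝ᵥ w, p.2.2) := by
  simp [planeMap]

theorem planeMap_zero_one (p : JetSpace n) (w : Fin n → ℂ) :
    planeMap p 0 1 w = (p.1, p.2.1, p.2.2 + w) := by
  simp [planeMap]

theorem IsContactMap.apply_eq_of_fst_contactDeriv_eq_zero
    {F : JetSpace n → JetSpace n} (hc : IsContactMap F) (hF : Differentiable ℂ F)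
    (h : ∀ p u, (contactDeriv F p (u, 0)).1 = 0) (p : JetSpace n) (w : Fin n → ℂ) :
    (F (p.1 + w, p.2.1 + p.2.2 ⬝ᵥ w, p.2.2)).1 = (F p).1 ∧
      (F (p.1 + w, p.2.1 + p.2.2 ⬝ᵥ w, p.2.2)).2.1 = (F p).2.1 := by
  have hd : Differentiable ℂ (F ∘ planeMap p 1 0) := hF.comp (differentiable_planeMap p 1 0)
  have hz : ∀ x v, (fderiv ℂ (F ∘ planeMap p 1 0) x v).1 = 0 ∧
      (fderiv ℂ (F ∘ planeMap p 1 0) x v).2.1 = 0 := by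
    intro x v
    rw [hc.fderiv_comp_planeMap hF p (by simp)]
    simp [contactLift, h]
  have h1 := is_const_of_fderiv_eq_zero hd.fst (fun x => by
    rw [(hd x).hasFDerivAt.fst.fderiv]; ext1 v; exact (hz x v).1) w 0
  have h2 := is_const_of_fderiv_eq_zero hd.snd.fst (fun x => by
    rw [(hd x).hasFDerivAt.snd.fst.fderiv]; ext1 v; exact (hz x v).2) w 0
  simp only [Function.comp_apply, planeMap_zero, planeMap_one_zero] at h1 h2
  exact ⟨h1, h2⟩

theorem IsContactMap.apply_eq_of_snd_contactDeriv_eq_zero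
    {F : JetSpace n → JetSpace n} (hc : IsContactMap F) (hF : Differentiable ℂ F)
    (h : ∀ p v, (contactDeriv F p (0, v)).2 = 0) (p : JetSpace n) (w : Fin n → ℂ) :
    (F (p.1, p.2.1, p.2.2 + w)).2.2 = (F p).2.2 ∧
      (F p).2.2 ⬝ᵥ (F (p.1, p.2.1, p.2.2 + w)).1 - (F (p.1, p.2.1, p.2.2 + w)).2.1 =
        (F p).2.2 ⬝ᵥ (F p).1 - (F p).2.1 := by
  have hd : Differentiable ℂ (F ∘ planeMap p 0 1) := hF.comp (differentiable_planeMap p 0 1)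
  have hz := hc.fderiv_comp_planeMap hF p (U := 0) (V := 1) (by simp)
  have h1 : ∀ w, (F (planeMap p 0 1 w)).2.2 = (F p).2.2 := by
    intro w
    have := is_const_of_fderiv_eq_zero hd.snd.snd (fun x => by
      rw [(hd x).hasFDerivAt.snd.snd.fderiv]
      ext1 v
      change (fderiv ℂ (F ∘ planeMap p 0 1) x v).2.2 = 0
      rw [hz]
      simp [contactLift, h]) w 0
    simpa using this
  have hB : Differentiable ℂ fun _ : Fin n → ℂ => (F p).2.2 := differentiable_const _
  have h2 := is_const_of_fderiv_eq_zero ((hB.dotProduct hd.fst).sub hd.snd.fst) (fun x => by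
    ext1 v
    rw [fderiv_sub ((hB.dotProduct hd.fst) x) (hd.snd.fst x), _root_.sub_apply,
      fderiv_dotProduct_apply hB hd.fst, (hd x).hasFDerivAt.fst.fderiv,
      (hd x).hasFDerivAt.snd.fst.fderiv]
    simp [hz, contactLift, h1]) w 0
  have hw := h1 w
  simp only [Pi.sub_apply, Function.comp_apply, planeMap_zero_one, add_zero] at hw h2
  exact ⟨hw, h2⟩

/-- A holomorphic contact map which exchanges the two Legendrian foliations and fixes the
one-jets of the form `(θ, ½ θ · θ, θ)` is the Legendre involution. -/
theorem IsContactMap.eq_legendreMap [Nonempty (Fin n)]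
    {F : JetSpace n → JetSpace n} (hc : IsContactMap F) (hF : Differentiable ℂ F)
    (h₁ : ∀ p u, (contactDeriv F p (u, 0)).1 = 0) (h₂ : ∀ p v, (contactDeriv F p (0, v)).2 = 0)
    (hY : ∀ θ, F (θ, (1 / 2) * (θ ⬝ᵥ θ), θ) = (θ, (1 / 2) * (θ ⬝ᵥ θ), θ)) :
    F = legendreMap := by
  have hcone : ∀ θ b : Fin n → ℂ, θ ⬝ᵥ (F (θ, (1 / 2) * (θ ⬝ᵥ θ), b)).1 -
      (F (θ, (1 / 2) * (θ ⬝ᵥ θ), b)).2.1 = (1 / 2) * (θ ⬝ᵥ θ) := by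
    intro θ b
    have h := (hc.apply_eq_of_snd_contactDeriv_eq_zero hF h₂ (θ, (1 / 2) * (θ ⬝ᵥ θ), θ) (b - θ)).2
    simp only [add_sub_cancel, hY] at h
    rw [h]
    ring
  have hquad : ∀ (p : JetSpace n) (θ : Fin n → ℂ),
      p.2.1 + p.2.2 ⬝ᵥ (θ - p.1) = (1 / 2) * (θ ⬝ᵥ θ) →
      θ ⬝ᵥ (F p).1 - (F p).2.1 = (1 / 2) * (θ ⬝ᵥ θ) := by
    intro p θ hθ
    obtain ⟨ha, hb⟩ := hc.apply_eq_of_fst_contactDeriv_eq_zero hF h₁ p (θ - p.1)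
    rw [hθ, add_sub_cancel] at ha hb
    rw [← ha, ← hb, hcone]
  have hgen : ∀ p : JetSpace n, p.2.2 ⬝ᵥ p.2.2 - 2 * (p.2.2 ⬝ᵥ p.1 - p.2.1) ≠ 0 →
      (F p).1 = p.2.2 ∧ (F p).2.1 = p.2.2 ⬝ᵥ p.1 - p.2.1 := by
    intro p hp
    obtain ⟨ρ, hρ⟩ := IsAlgClosed.exists_pow_nat_eq
      (p.2.2 ⬝ᵥ p.2.2 - 2 * (p.2.2 ⬝ᵥ p.1 - p.2.1)) two_pos
    have hρ0 : ρ ≠ 0 := by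
      rintro rfl
      exact hp (by rw [← hρ]; ring)
    have hline : ∀ (i : Fin n) (t : ℂ), t ^ 2 = ρ ^ 2 →
        p.2.2 ⬝ᵥ (F p).1 + t * (F p).1 i - (F p).2.1 =
          p.2.1 + p.2.2 ⬝ᵥ p.2.2 + t * p.2.2 i - p.2.2 ⬝ᵥ p.1 := by
      intro i t ht
      have h := hquad p (p.2.2 + Pi.single i t) (by
        simp only [dotProduct_sub, dotProduct_add, add_dotProduct, dotProduct_single,
          single_dotProduct, Pi.add_apply, Pi.single_eq_same]
        linear_combination (-1 / 2) * (ht + hρ))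
      simp only [dotProduct_add, add_dotProduct, dotProduct_single,
          single_dotProduct, Pi.add_apply, Pi.single_eq_same] at h
      linear_combination h + (1 / 2) * (ht + hρ)
    have hfst : (F p).1 = p.2.2 := by
      ext i
      have h : ρ * ((F p).1 i - p.2.2 i) = 0 := by
        linear_combination (1 / 2) * (hline i ρ rfl - hline i (-ρ) (by ring))
      exact sub_eq_zero.1 ((mul_eq_zero.1 h).resolve_left hρ0)
    refine ⟨hfst, ?_⟩
    have h := hline (Classical.arbitrary _) ρ rfl
    rw [hfst] at h
    linear_combination -h
  have hdisc : Differentiable ℂ fun p : JetSpace n =>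
      p.2.2 ⬝ᵥ p.2.2 - 2 * (p.2.2 ⬝ᵥ p.1 - p.2.1) := by
    have hb : Differentiable ℂ fun p : JetSpace n => p.2.2 := differentiable_snd.snd
    exact (hb.dotProduct hb).sub (((hb.dotProduct differentiable_fst).sub
      differentiable_snd.fst).const_mul 2)
  have hdense := dense_ne_zero_of_holomorphic hdisc (p := (0, 1, 0)) (by simp)
  have hfst : ∀ p, (F p).1 = p.2.2 := congrFun <|
    hF.continuous.fst.ext_on hdense (by fun_prop) fun p hp => (hgen p hp).1
  have hval : ∀ p, (F p).2.1 = p.2.2 ⬝ᵥ p.1 - p.2.1 := congrFun <|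
    hF.continuous.snd.fst.ext_on hdense
      (by simp only [dotProduct]; fun_prop) fun p hp => (hgen p hp).2
  funext p
  refine Prod.ext (hfst p) (Prod.ext (hval p) (dotProduct_eq _ _ fun v => ?_))
  have h := (hc.apply_eq_of_snd_contactDeriv_eq_zero hF h₂ p v).2
  simp only [hfst, hval, dotProduct_add, add_dotProduct] at h
  change _ = p.1 ⬝ᵥ v
  rw [dotProduct_comm p.1]
  linear_combination h

end LegendreMap

section Blocks

open Matrix

variable {n : ℕ}

theorem injective_of_unpackTriple_planeMap_mem_CGXset {p : JetSpace n}
    {U V : Matrix (Fin n) (Fin n) ℂ}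
    (hUV : ∀ x y, (V *ᵥ x) ⬝ᵥ (U *ᵥ y) = (V *ᵥ y) ⬝ᵥ (U *ᵥ x))
    (h : unpackTriple (planeMap p U V) ∈ CGXset n) :
    Function.Injective U.mulVec ∧ Function.Injective V.mulVec := by
  obtain ⟨-, -, h1, h2⟩ := h
  have hd := differentiable_planeMap p U V
  obtain ⟨x, hx⟩ := h1.nonempty
  obtain ⟨y, hy⟩ := h2.nonempty
  constructor
  · convert hx.1 using 1
    funext v
    rw [(fderiv_unpackTriple hd x v).1, fderiv_planeMap p hUV]
    rfl
  · convert hy.1 using 1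
    funext v
    rw [(fderiv_unpackTriple hd y v).2.2, fderiv_planeMap p hUV]
    rfl

theorem unpackTriple_planeMap_mem_CGXset (p : JetSpace n) {U V : Matrix (Fin n) (Fin n) ℂ}
    (hUV : ∀ x y, (V *ᵥ x) ⬝ᵥ (U *ᵥ y) = (V *ᵥ y) ⬝ᵥ (U *ᵥ x))
    (hU : Function.Injective U.mulVec) (hV : Function.Injective V.mulVec) :
    unpackTriple (planeMap p U V) ∈ CGXset n := by
  refine (isLegendrianMap_planeMap p hUV).unpackTriple_mem_CGXset (x₀ := 0) ?_ ?_ <;>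
    simpa only [fderiv_planeMap p hUV] using ‹_›

variable {F : JetSpace n → JetSpace n}

theorem IsContactMap.contactDeriv_contactDeriv (hc : IsContactMap F) (hF : Differentiable ℂ F)
    (hFF : Function.Involutive F) (p : JetSpace n) (x : (Fin n → ℂ) × (Fin n → ℂ)) :
    contactDeriv F (F p) (contactDeriv F p x) = x := by
  have h := congrArg (fun L => forgetValue (L (contactLift p.2.2 x)))
    (fderiv_comp p (hF (F p)) (hF p))
  rw [hFF.comp_self, fderiv_id] at h
  simp only [ContinuousLinearMap.comp_apply, hc.fderiv_contactLift] at h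
  exact h.symm

theorem IsContactMap.contactDeriv_isotropic (hc : IsContactMap F) (hF : Differentiable ℂ F)
    (p : JetSpace n) {U V : Matrix (Fin n) (Fin n) ℂ}
    (hUV : ∀ x y, (V *ᵥ x) ⬝ᵥ (U *ᵥ y) = (V *ᵥ y) ⬝ᵥ (U *ᵥ x)) (v w : Fin n → ℂ) :
    (contactDeriv F p (U *ᵥ v, V *ᵥ v)).1 ⬝ᵥ (contactDeriv F p (U *ᵥ w, V *ᵥ w)).2 =
      (contactDeriv F p (U *ᵥ v, V *ᵥ v)).2 ⬝ᵥ (contactDeriv F p (U *ᵥ w, V *ᵥ w)).1 := by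
  have h := (hc.comp_isLegendrianMap hF (isLegendrianMap_planeMap p hUV)).isotropic 0 v w
  simp only [hc.fderiv_comp_planeMap hF p hUV, planeMap_zero] at h
  exact h

theorem IsContactMap.ker_fst_contactDeriv_isotropic (hc : IsContactMap F)
    (hF : Differentiable ℂ F) (hFF : Function.Involutive F) (p : JetSpace n)
    {x y : (Fin n → ℂ) × (Fin n → ℂ)} (hx : (contactDeriv F p x).1 = 0)
    (hy : (contactDeriv F p y).1 = 0) : x.1 ⬝ᵥ y.2 = x.2 ⬝ᵥ y.1 := by
  have h := hc.contactDeriv_isotropic hF (F p) (U := 0) (V := 1) (by simp)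
    (contactDeriv F p x).2 (contactDeriv F p y).2
  have hz : ∀ z, (contactDeriv F p z).1 = 0 → ((0 : Matrix (Fin n) (Fin n) ℂ) *ᵥ
      (contactDeriv F p z).2, (1 : Matrix (Fin n) (Fin n) ℂ) *ᵥ (contactDeriv F p z).2) =
      contactDeriv F p z := fun z hz => by simp [← hz]
  rwa [hz x hx, hz y hy, hc.contactDeriv_contactDeriv hF hFF,
    hc.contactDeriv_contactDeriv hF hFF] at h

theorem IsContactMap.ker_snd_contactDeriv_isotropic (hc : IsContactMap F)
    (hF : Differentiable ℂ F) (hFF : Function.Involutive F) (p : JetSpace n)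
    {x y : (Fin n → ℂ) × (Fin n → ℂ)} (hx : (contactDeriv F p x).2 = 0)
    (hy : (contactDeriv F p y).2 = 0) : x.1 ⬝ᵥ y.2 = x.2 ⬝ᵥ y.1 := by
  have h := hc.contactDeriv_isotropic hF (F p) (U := 1) (V := 0) (by simp)
    (contactDeriv F p x).1 (contactDeriv F p y).1
  have hz : ∀ z, (contactDeriv F p z).2 = 0 → ((1 : Matrix (Fin n) (Fin n) ℂ) *ᵥ
      (contactDeriv F p z).1, (0 : Matrix (Fin n) (Fin n) ℂ) *ᵥ (contactDeriv F p z).1) =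
      contactDeriv F p z := fun z hz => by simp [← hz]
  rwa [hz x hx, hz y hy, hc.contactDeriv_contactDeriv hF hFF,
    hc.contactDeriv_contactDeriv hF hFF] at h

/-- If `F` preserves `GX_ℂ`, it cannot regularize a Legendrian plane which is not in `GX_ℂ`. -/
theorem IsContactMap.injective_of_injective_contactDeriv (hc : IsContactMap F)
    (hF : Differentiable ℂ F) (hFF : Function.Involutive F)
    (hGX : ∀ G, unpackTriple G ∈ CGXset n → unpackTriple (F ∘ G) ∈ CGXset n) (p : JetSpace n)
    {U V : Matrix (Fin n) (Fin n) ℂ}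
    (hUV : ∀ x y, (V *ᵥ x) ⬝ᵥ (U *ᵥ y) = (V *ᵥ y) ⬝ᵥ (U *ᵥ x))
    (h₁ : Function.Injective fun x => (contactDeriv F p (U *ᵥ x, V *ᵥ x)).1)
    (h₂ : Function.Injective fun x => (contactDeriv F p (U *ᵥ x, V *ᵥ x)).2) :
    Function.Injective U.mulVec ∧ Function.Injective V.mulVec := by
  have hmem : unpackTriple (F ∘ planeMap p U V) ∈ CGXset n := by
    refine (hc.comp_isLegendrianMap hF
      (isLegendrianMap_planeMap p hUV)).unpackTriple_mem_CGXset (x₀ := 0) ?_ ?_ <;>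
    simpa only [hc.fderiv_comp_planeMap hF p hUV, planeMap_zero] using ‹_›
  have h := hGX _ hmem
  rw [← Function.comp_assoc, hFF.comp_self, Function.id_comp] at h
  exact injective_of_unpackTriple_planeMap_mem_CGXset hUV h

theorem exists_ne_zero_and_ne_zero_of_linearMap {V W : Type*} [AddCommGroup V] [Module ℂ V]
    [AddCommGroup W] [Module ℂ W] {f g : V →ₗ[ℂ] W} (hf : ∃ x, f x ≠ 0) (hg : ∃ x, g x ≠ 0) :
    ∃ x, f x ≠ 0 ∧ g x ≠ 0 := by
  obtain ⟨x, hx⟩ := hf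
  obtain ⟨y, hy⟩ := hg
  by_cases hgx : g x = 0
  · by_cases hfy : f y = 0
    · exact ⟨x + y, by simpa [hfy], by simpa [hgx]⟩
    · exact ⟨y, hfy, hy⟩
  · exact ⟨x, hx, hgx⟩

theorem Matrix.IsSymm.mulVec_dotProduct_comm {M : Matrix (Fin n) (Fin n) ℂ} (hM : M.IsSymm)
    (x y : Fin n → ℂ) : (M *ᵥ x) ⬝ᵥ y = (M *ᵥ y) ⬝ᵥ x := by
  rw [dotProduct_comm, dotProduct_mulVec, ← mulVec_transpose, hM.eq]

theorem IsContactMap.contactDeriv_inl_eq_zero (hc : IsContactMap F) (hF : Differentiable ℂ F)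
    (hFF : Function.Involutive F)
    (hGX : ∀ G, unpackTriple G ∈ CGXset n → unpackTriple (F ∘ G) ∈ CGXset n) (p : JetSpace n) :
    (∀ u, (contactDeriv F p (u, 0)).1 = 0) ∨ (∀ u, (contactDeriv F p (u, 0)).2 = 0) := by
  by_contra! h
  obtain ⟨e, he1, he2⟩ := exists_ne_zero_and_ne_zero_of_linearMap
    (f := LinearMap.fst ℂ _ _ ∘ₗ contactDeriv F p ∘ₗ LinearMap.inl ℂ _ _)
    (g := LinearMap.snd ℂ _ _ ∘ₗ contactDeriv F p ∘ₗ LinearMap.inl ℂ _ _) h.1 h.2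
  obtain ⟨M, hM, hMe, h1, h2⟩ := exists_isSymm_injective_graph
    (f := LinearMap.fst ℂ _ _ ∘ₗ contactDeriv F p) (g := LinearMap.snd ℂ _ _ ∘ₗ contactDeriv F p)
    (e := e) (fun _ _ => hc.ker_fst_contactDeriv_isotropic hF hFF p)
    (fun _ _ => hc.ker_snd_contactDeriv_isotropic hF hFF p) he1 he2
  have hinj := (hc.injective_of_injective_contactDeriv hF hFF hGX p (U := 1) (V := M)
    (fun x y => by simpa using hM.mulVec_dotProduct_comm x y)
    (by simpa using h1) (by simpa using h2)).2
  have he : e = 0 := hinj (by rw [hMe, mulVec_zero])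
  exact he1 (by rw [he, map_zero])

theorem IsContactMap.contactDeriv_inr_eq_zero (hc : IsContactMap F) (hF : Differentiable ℂ F)
    (hFF : Function.Involutive F)
    (hGX : ∀ G, unpackTriple G ∈ CGXset n → unpackTriple (F ∘ G) ∈ CGXset n) (p : JetSpace n) :
    (∀ v, (contactDeriv F p (0, v)).1 = 0) ∨ (∀ v, (contactDeriv F p (0, v)).2 = 0) := by
  by_contra! h
  obtain ⟨e, he1, he2⟩ := exists_ne_zero_and_ne_zero_of_linearMap
    (f := LinearMap.fst ℂ _ _ ∘ₗ contactDeriv F p ∘ₗ LinearMap.inr ℂ _ _)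
    (g := LinearMap.snd ℂ _ _ ∘ₗ contactDeriv F p ∘ₗ LinearMap.inr ℂ _ _) h.1 h.2
  let swap := (LinearEquiv.prodComm ℂ (Fin n → ℂ) (Fin n → ℂ)).toLinearMap
  obtain ⟨M, hM, hMe, h1, h2⟩ := exists_isSymm_injective_graph
    (f := LinearMap.fst ℂ _ _ ∘ₗ contactDeriv F p ∘ₗ swap)
    (g := LinearMap.snd ℂ _ _ ∘ₗ contactDeriv F p ∘ₗ swap) (e := e)
    (fun _ _ hx hy => (hc.ker_fst_contactDeriv_isotropic hF hFF p hx hy).symm)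
    (fun _ _ hx hy => (hc.ker_snd_contactDeriv_isotropic hF hFF p hx hy).symm) he1 he2
  have hinj := (hc.injective_of_injective_contactDeriv hF hFF hGX p (U := M) (V := 1)
    (fun x y => by
      simpa only [one_mulVec, dotProduct_comm] using hM.mulVec_dotProduct_comm y x)
    (by simpa [swap] using h1) (by simpa [swap] using h2)).1
  have he : e = 0 := hinj (by rw [hMe, mulVec_zero])
  exact he1 (by rw [he, map_zero])

theorem IsContactMap.contactDeriv_blocks [Nonempty (Fin n)] (hc : IsContactMap F) (hF : Differentiable ℂ F)
    (hFF : Function.Involutive F)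
    (hGX : ∀ G, unpackTriple G ∈ CGXset n → unpackTriple (F ∘ G) ∈ CGXset n) (p : JetSpace n) :
    ((∀ u, (contactDeriv F p (u, 0)).1 = 0) ∧ ∀ v, (contactDeriv F p (0, v)).2 = 0) ∨
      ((∀ u, (contactDeriv F p (u, 0)).2 = 0) ∧ ∀ v, (contactDeriv F p (0, v)).1 = 0) := by
  have hsplit : ∀ x, contactDeriv F p x =
      contactDeriv F p (x.1, 0) + contactDeriv F p (0, x.2) := fun x => by
    rw [← map_add]; simp
  have hsurj : Function.Surjective (contactDeriv F p) := by
    have h := hc.contactDeriv_contactDeriv hF hFF (F p)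
    rw [hFF p] at h
    exact fun x => ⟨_, h x⟩
  have hone : (1 : Fin n → ℂ) ≠ 0 := one_ne_zero
  obtain ⟨x, hx⟩ := hsurj (1, 1)
  rw [hsplit x] at hx
  rcases hc.contactDeriv_inl_eq_zero hF hFF hGX p with h1 | h1 <;>
    rcases hc.contactDeriv_inr_eq_zero hF hFF hGX p with h2 | h2
  · exact absurd (congrArg Prod.fst hx).symm (by simp [h1, h2])
  · exact .inl ⟨h1, h2⟩
  · exact .inr ⟨h1, h2⟩
  · exact absurd (congrArg Prod.snd hx).symm (by simp [h1, h2])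

theorem differentiable_contactDeriv (hF : Differentiable ℂ F) (x : (Fin n → ℂ) × (Fin n → ℂ)) :
    Differentiable ℂ fun p => contactDeriv F p x := by
  have hlift : Differentiable ℂ fun p : JetSpace n => contactLift p.2.2 x :=
    (differentiable_const _).prodMk ((differentiable_snd.snd.dotProduct
      (differentiable_const _)).prodMk (differentiable_const _))
  have h := (differentiable_fderiv_of_holomorphic hF).clm_apply hlift
  exact h.fst.prodMk h.snd.snd

theorem IsContactMap.contactDeriv_blocks_forall [Nonempty (Fin n)] (hc : IsContactMap F)
    (hF : Differentiable ℂ F) (hFF : Function.Involutive F)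
    (hGX : ∀ G, unpackTriple G ∈ CGXset n → unpackTriple (F ∘ G) ∈ CGXset n) :
    ((∀ p u, (contactDeriv F p (u, 0)).1 = 0) ∧ ∀ p v, (contactDeriv F p (0, v)).2 = 0) ∨
      ((∀ p u, (contactDeriv F p (u, 0)).2 = 0) ∧ ∀ p v, (contactDeriv F p (0, v)).1 = 0) := by
  have hcont : ∀ x, Continuous fun p => contactDeriv F p x :=
    fun x => (differentiable_contactDeriv hF x).continuous
  by_cases h : ∀ p u, (contactDeriv F p (u, 0)).1 = 0
  · refine .inl ⟨h, fun p => ?_⟩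
    rcases hc.contactDeriv_blocks hF hFF hGX p with h' | h'
    · exact h'.2
    · have hzero : contactDeriv F p (1, 0) = 0 := Prod.ext (h p 1) (h'.1 1)
      have hone := hc.contactDeriv_contactDeriv hF hFF p (1, 0)
      rw [hzero, map_zero] at hone
      exact absurd (congrArg Prod.fst hone).symm one_ne_zero
  · push Not at h
    obtain ⟨p₀, u₀, h⟩ := h
    obtain ⟨i, hi⟩ := Function.ne_iff.1 h
    have hdense := dense_ne_zero_of_holomorphic
      (differentiable_pi.1 (differentiable_contactDeriv hF (u₀, 0)).fst i) hi
    have hblock : ∀ p, (contactDeriv F p (u₀, 0)).1 i ≠ 0 →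
        (∀ u, (contactDeriv F p (u, 0)).2 = 0) ∧ ∀ v, (contactDeriv F p (0, v)).1 = 0 :=
      fun p hp => (hc.contactDeriv_blocks hF hFF hGX p).resolve_left fun h' =>
        hp (congrFun (h'.1 u₀) i)
    exact .inr ⟨fun p u => congrFun ((hcont (u, 0)).snd.ext_on hdense continuous_const
      fun q hq => (hblock q hq).1 u) p, fun p v => congrFun ((hcont (0, v)).fst.ext_on hdense
        continuous_const fun q hq => (hblock q hq).2 v) p⟩

theorem differentiable_legendreMap : Differentiable ℂ (legendreMap (n := n)) :=
  differentiable_snd.snd.prodMk (((differentiable_snd.snd.dotProduct differentiable_fst).sub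
    differentiable_snd.fst).prodMk differentiable_fst)

theorem fderiv_legendreMap_contactLift (p : JetSpace n) (x : (Fin n → ℂ) × (Fin n → ℂ)) :
    fderiv ℂ legendreMap p (contactLift p.2.2 x) = contactLift p.1 (x.2, x.1) := by
  have hb : Differentiable ℂ fun p : JetSpace n => p.2.2 := differentiable_snd.snd
  have hθ : Differentiable ℂ fun p : JetSpace n => p.1 := differentiable_fst
  have hid : HasFDerivAt (fun q : JetSpace n => q) _ p := hasFDerivAt_id (𝕜 := ℂ) p
  have h : HasFDerivAt legendreMap _ p := hid.snd.snd.prodMk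
    ((((hb.dotProduct hθ) p).hasFDerivAt.sub hid.snd.fst).prodMk hid.fst)
  rw [h.fderiv]
  refine Prod.ext rfl (Prod.ext ?_ rfl)
  simp only [ContinuousLinearMap.prod_apply, _root_.sub_apply, fderiv_dotProduct_apply hb hθ]
  rw [hid.snd.snd.fderiv, hid.fst.fderiv]
  simp [contactLift, dotProduct_comm]

theorem legendreMap_involutive : Function.Involutive (legendreMap (n := n)) := by
  intro p
  simp [legendreMap, dotProduct_comm]

theorem IsContactMap.fderiv_legendreMap_comp (hc : IsContactMap F) (hF : Differentiable ℂ F)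
    (p : JetSpace n) (x : (Fin n → ℂ) × (Fin n → ℂ)) :
    fderiv ℂ (legendreMap ∘ F) p (contactLift p.2.2 x) =
      contactLift (F p).1 (contactDeriv F p x).swap := by
  rw [fderiv_comp p (differentiable_legendreMap _) (hF p), ContinuousLinearMap.comp_apply,
    hc.fderiv_contactLift, fderiv_legendreMap_contactLift]
  rfl

/-- A holomorphic contact map which preserves the two Legendrian foliations and fixes the
one-jets of the form `(θ, ½ θ · θ, θ)` is the identity. -/
theorem IsContactMap.eq_id [Nonempty (Fin n)] (hc : IsContactMap F) (hF : Differentiable ℂ F)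
    (h₁ : ∀ p u, (contactDeriv F p (u, 0)).2 = 0) (h₂ : ∀ p v, (contactDeriv F p (0, v)).1 = 0)
    (hY : ∀ θ, F (θ, (1 / 2) * (θ ⬝ᵥ θ), θ) = (θ, (1 / 2) * (θ ⬝ᵥ θ), θ)) : F = id := by
  have hd := hc.fderiv_legendreMap_comp hF
  have hc' : IsContactMap (legendreMap ∘ F) := fun p x => by rw [hd]; rfl
  have h := hc'.eq_legendreMap (differentiable_legendreMap.comp hF)
    (fun p u => (congrArg Prod.fst (hd p (u, 0))).trans (h₁ p u))
    (fun p v => (congrArg (fun q => q.2.2) (hd p (0, v))).trans (h₂ p v))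
    (fun θ => by
      rw [Function.comp_apply, hY]
      refine Prod.ext rfl (Prod.ext ?_ rfl)
      simp only [legendreMap]
      ring)
  funext p
  exact legendreMap_involutive.injective (congrFun h p)

/-- A holomorphic map preserving `GX_ℂ` is a contact map. -/
theorem isContactMap_of_preserves_CGXset (hF : Differentiable ℂ F)
    (hGX : ∀ G, unpackTriple G ∈ CGXset n → unpackTriple (F ∘ G) ∈ CGXset n) :
    IsContactMap F := by
  have hplane : ∀ (p : JetSpace n) (c : ℂ) (u : Fin n → ℂ), c ≠ 0 →
      (fderiv ℂ F p (contactLift p.2.2 (u, c • u))).2.1 =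
        (F p).2.2 ⬝ᵥ (fderiv ℂ F p (contactLift p.2.2 (u, c • u))).1 := by
    intro p c u hcz
    have hUV : ∀ x y : Fin n → ℂ, ((c • 1 : Matrix (Fin n) (Fin n) ℂ) *ᵥ x) ⬝ᵥ
        ((1 : Matrix (Fin n) (Fin n) ℂ) *ᵥ y) = ((c • 1 : Matrix (Fin n) (Fin n) ℂ) *ᵥ y) ⬝ᵥ
        ((1 : Matrix (Fin n) (Fin n) ℂ) *ᵥ x) := fun x y => by
      simp [smul_mulVec, dotProduct_comm x y]
    have hmem := hGX _ (unpackTriple_planeMap_mem_CGXset p hUV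
      (fun x y h => by simpa using h) (fun x y h => by simpa [smul_mulVec, hcz] using h))
    have h := ((cCreative_unpackTriple_iff (hF.comp (differentiable_planeMap _ _ _))).1
      hmem.2.1).2 0 u
    rw [fderiv_comp 0 (hF _) (differentiable_planeMap _ _ _ 0), ContinuousLinearMap.comp_apply,
      fderiv_planeMap p hUV, Function.comp_apply, planeMap_zero] at h
    simpa [smul_mulVec] using h
  intro p x
  have hx : x = ((2 : ℂ) • x.1 - x.2, (1 : ℂ) • ((2 : ℂ) • x.1 - x.2)) +
      (x.2 - x.1, (2 : ℂ) • (x.2 - x.1)) := by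
    ext i
    · simp; ring
    · simp; ring
  rw [hx, map_add, map_add, Prod.fst_add, Prod.snd_add, Prod.fst_add, dotProduct_add,
    hplane p 1 _ one_ne_zero, hplane p 2 _ two_ne_zero]

end Blocks

/-- **Corollary 1**: a transform of `GX_ℂ` which is an involution, whose fixed point set is
exactly `GY_ℂ`, and which is induced by a holomorphic map `F : ℂ^{2n+1} → ℂ^{2n+1}`,
must be the complex Legendre involution. -/
theorem complex_legendre_involution_characterization (n : ℕ) (hn : 1 ≤ n)
    (T : CTripleMap n → CTripleMap n)
    (hmap : ∀ Φ ∈ CGXset n, T Φ ∈ CGXset n)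
    (hinv : ∀ Φ ∈ CGXset n, T (T Φ) = Φ)
    (hfix : ∀ Φ ∈ CGXset n, (Φ ∈ CGYset n → T Φ = Φ) ∧ (Φ ∉ CGYset n → T Φ ≠ Φ))
    (F : (Fin n → ℂ) × ℂ × (Fin n → ℂ) → (Fin n → ℂ) × ℂ × (Fin n → ℂ))
    (hF : Differentiable ℂ F)
    (hTF : ∀ Φ ∈ CGXset n, cPackTriple n (T Φ) = F ∘ cPackTriple n Φ) :
    ∀ Φ ∈ CGXset n, T Φ = CLegendre n Φ := by
  have : Nonempty (Fin n) := ⟨⟨0, hn⟩⟩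
  have hT : ∀ Φ ∈ CGXset n, T Φ = unpackTriple (F ∘ cPackTriple n Φ) := fun Φ hΦ =>
    congrArg unpackTriple (hTF Φ hΦ)
  have hGX : ∀ G, unpackTriple G ∈ CGXset n → unpackTriple (F ∘ G) ∈ CGXset n := fun G hG =>
    hT _ hG ▸ hmap _ hG
  have hplane : ∀ (p : JetSpace n) (c : ℂ), c ≠ 0 →
      unpackTriple (planeMap p 1 (c • 1)) ∈ CGXset n := fun p c hcz =>
    unpackTriple_planeMap_mem_CGXset p
      (fun x y => by simp [Matrix.smul_mulVec, dotProduct_comm x y])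
      (fun x y h => by simpa using h) (fun x y h => by simpa [Matrix.smul_mulVec, hcz] using h)
  have hFF : Function.Involutive F := fun p => by
    have hmem := hplane p 1 one_ne_zero
    have h := hinv _ hmem
    rw [hT _ (hmap _ hmem), hT _ hmem] at h
    have h0 := congrFun (congrArg (cPackTriple n) h) 0
    change F (F (planeMap p 1 _ 0)) = planeMap p 1 _ 0 at h0
    rwa [planeMap_zero] at h0
  have hY : ∀ θ, F (θ, (1 / 2) * (θ ⬝ᵥ θ), θ) = (θ, (1 / 2) * (θ ⬝ᵥ θ), θ) := fun θ => by
    have hmem := hplane (θ, (1 / 2) * (θ ⬝ᵥ θ), θ) 1 one_ne_zero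
    have hmemY : unpackTriple (planeMap (θ, (1 / 2) * (θ ⬝ᵥ θ), θ) 1 ((1 : ℂ) • 1)) ∈
        CGYset n := by
      refine ⟨_, hmem.1.1, hmem.2.2.1, Prod.ext rfl (Prod.ext (funext fun w => ?_) ?_)⟩
      · have hsq : ∑ i, (θ + w) i ^ 2 = (θ + w) ⬝ᵥ (θ + w) := by simp [dotProduct, sq]
        simp only [unpackTriple, planeMap, Matrix.one_mulVec, one_smul, hsq, add_dotProduct,
          dotProduct_add, dotProduct_comm w θ]
        ring
      · simp [unpackTriple, planeMap]
    have h := (hfix _ hmem).1 hmemY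
    rw [hT _ hmem] at h
    have h0 := congrFun (congrArg (cPackTriple n) h) 0
    change F (planeMap _ 1 _ 0) = planeMap _ 1 _ 0 at h0
    rwa [planeMap_zero] at h0
  have hc := isContactMap_of_preserves_CGXset hF hGX
  rcases hc.contactDeriv_blocks_forall hF hFF hGX with h | h
  · intro Φ hΦ
    rw [hT Φ hΦ, hc.eq_legendreMap hF h.1 h.2 hY]
    rfl
  · have hmem := hplane 0 2 two_ne_zero
    refine absurd ?_ ((hfix _ hmem).2 ?_)
    · rw [hT _ hmem, hc.eq_id hF h.1 h.2 hY]
      rfl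
    · rintro ⟨θ, -, -, hθ⟩
      have h1 := congrFun (congrFun ((congrArg (fun Φ => Φ.1) hθ).trans
        (congrArg (fun Φ => Φ.2.2) hθ).symm) 1) ⟨0, hn⟩
      norm_num [unpackTriple, planeMap, Matrix.smul_mulVec] at h1
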